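/- Let Ω be a bounded domain in ℝ⁴ containing the origin, let R ≥ R_Ω and let q > 2. Then for every u ∈ C₀^∞(Ω \ {0}) one has ( ∫_Ω | u(x) / E₂(|x|/R) |^q dx )^{1/q} ≤ (1/(4√2·π)) · ( √(3/2) + 9/4 + √(1/3) ) · (1 + q/2)^{1/2 + 1/q} · |Ω|^{1/q} · ( Ĩ₄[u,Ω,R] )^{1/2}, where |Ω| denotes the Lebesgue measure of Ω. -/

import Mathlib

open MeasureTheory Real

/-- `E₁(t) = 1 - ln t`. -/
noncomputable def E1 (t : ℝ) : ℝ := 1 - Real.log t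

/-- `E₂(t) = ln (e E₁(t)) = 1 + ln E₁(t)`. -/
noncomputable def E2 (t : ℝ) : ℝ := 1 + Real.log (E1 t)

/-- The Euclidean Laplacian of a scalar function on `ℝⁿ`. -/
noncomputable def lap {n : ℕ} (f : EuclideanSpace ℝ (Fin n) → ℝ) :
    EuclideanSpace ℝ (Fin n) → ℝ := fun x =>
  ∑ i, fderiv ℝ (fun y => fderiv ℝ f y (EuclideanSpace.single i 1)) x (EuclideanSpace.single i 1)

/-- `Ĩ₄[u, Ω, R] = ∫_Ω (Δu)² dx - ∫_Ω u²/(|x|⁴ E₁(|x|/R)²) dx`. -/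
noncomputable def tildeI4 (Ω : Set (EuclideanSpace ℝ (Fin 4))) (R : ℝ)
    (u : EuclideanSpace ℝ (Fin 4) → ℝ) : ℝ :=
  (∫ x in Ω, (lap u x) ^ 2) - ∫ x in Ω, (u x) ^ 2 / (‖x‖ ^ 4 * (E1 (‖x‖ / R)) ^ 2)


/-!
Put `w = u / E₂(|x|/R)`. The inequality splits into two independent estimates,
`‖Δw‖₂² ≤ 14 Ĩ₄[u]` and `‖w‖_q ≤ (4√2π)⁻¹ (1 + q/2)^(1/2 + 1/q) |Ω|^(1/q) ‖Δw‖₂`, and concludes with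
`√14 ≤ √(3/2) + 9/4 + √(1/3)`.

For the first estimate, let `D = x · ∇`. Two identities hold for functions `f` that are smooth with
compact support off the origin of `ℝ⁴`. The vector field `|x|⁻² Df ∇f - ½ |x|⁻² |∇f|² x` has
divergence `|x|⁻² Δf Df - 2 |x|⁻⁴ (Df)²` (`poho_eq_div`), so that
`∫ (Δf)² = ∫ (Δf - 2|x|⁻² Df)² + 4 ∫ |x|⁻⁴ (Df)²`; and `∫ |x|⁻⁴ Df = 0` (`integral_eul`). The first
one, used for both `u` and `w`, and the second one, used for `u²/E₁` and `u²/(E₁E₂)`, reduce the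
estimate to a pointwise inequality between quadratic forms in `Δu`, `Du` and `u`, with coefficients
depending on `1/E₁, 1/E₂ ∈ [0, 1]`. That inequality is `quad_ineq`, and the result is
`lap_div_E2_sq_le`.

For the second estimate, Green's identity against the regularized kernel `(|x - y|² + δ²)⁻¹` gives
`4π² |w(x)| ≤ ∫ |x - y|⁻² |Δw(y)| dy` (`newton_bound`). Hölder's inequality in the style of Schur and
Young (`young_bound`) bounds the `L^q` norm of the right-hand side over `Ω` by
`sup_x ‖ |x - ·|⁻² ‖_{L^s(Ω)} ‖Δw‖₂` with `1/s = 1/2 + 1/q`. Since `2s < 4`, the supremum is finite,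
and at most its value for the ball of volume `|Ω|` centred at `x` (`lintegral_kernel_le`), which
yields the constant (`sobolev_bound`).
-/

open scoped ContDiff Topology

/-- The partial derivative `∂ᵢ f`. -/
noncomputable def pd (i : Fin 4) (f : EuclideanSpace ℝ (Fin 4) → ℝ) :
    EuclideanSpace ℝ (Fin 4) → ℝ :=
  fun x => fderiv ℝ f x (EuclideanSpace.single i 1)

/-- The Euler (radial) derivative `D f = x · ∇f`. -/
noncomputable def eul (f : EuclideanSpace ℝ (Fin 4) → ℝ) : EuclideanSpace ℝ (Fin 4) → ℝ :=
  fun x => ∑ i, x i * pd i f x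

/-- Smooth functions vanishing off the set `K`, mostly used with `K` compact, away from the origin in the
weighted identities. -/
structure Adm (K : Set (EuclideanSpace ℝ (Fin 4))) (f : EuclideanSpace ℝ (Fin 4) → ℝ) : Prop where
  smooth : ContDiff ℝ ∞ f
  zero : ∀ x ∉ K, f x = 0

/-! ### Partial derivatives and the divergence theorem -/

section Calculus

variable {K : Set (EuclideanSpace ℝ (Fin 4))} {f g : EuclideanSpace ℝ (Fin 4) → ℝ}
  {x : EuclideanSpace ℝ (Fin 4)}

lemma lap_eq (f : EuclideanSpace ℝ (Fin 4) → ℝ) (x : EuclideanSpace ℝ (Fin 4)) :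
    lap f x = ∑ i, pd i (pd i f) x := rfl

lemma pd_congr (i : Fin 4) (h : f =ᶠ[𝓝 x] g) : pd i f x = pd i g x := by
  unfold pd; rw [h.fderiv_eq]

lemma pd_mul (i : Fin 4) (hf : DifferentiableAt ℝ f x) (hg : DifferentiableAt ℝ g x) :
    pd i (fun y => f y * g y) x = f x * pd i g x + g x * pd i f x := by
  unfold pd; rw [fderiv_fun_mul hf hg]; simp

lemma pd_add (i : Fin 4) (hf : DifferentiableAt ℝ f x) (hg : DifferentiableAt ℝ g x) :
    pd i (fun y => f y + g y) x = pd i f x + pd i g x := by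
  unfold pd; rw [fderiv_fun_add hf hg]; simp

lemma pd_coord (i j : Fin 4) : pd i (fun y => y j) x = if i = j then 1 else 0 := by
  unfold pd
  have : HasFDerivAt (fun y : EuclideanSpace ℝ (Fin 4) => y j)
      (EuclideanSpace.proj j : EuclideanSpace ℝ (Fin 4) →L[ℝ] ℝ) x :=
    (EuclideanSpace.proj j : EuclideanSpace ℝ (Fin 4) →L[ℝ] ℝ).hasFDerivAt
  rw [this.fderiv]
  simp [eq_comm]

lemma diff_coord (j : Fin 4) : DifferentiableAt ℝ (fun y : EuclideanSpace ℝ (Fin 4) => y j) x :=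
  (EuclideanSpace.proj j : EuclideanSpace ℝ (Fin 4) →L[ℝ] ℝ).differentiableAt

lemma smooth_coord (j : Fin 4) : ContDiff ℝ ∞ (fun y : EuclideanSpace ℝ (Fin 4) => y j) :=
  (EuclideanSpace.proj j : EuclideanSpace ℝ (Fin 4) →L[ℝ] ℝ).contDiff

lemma pd_sum {ι : Type} (s : Finset ι) (i : Fin 4) {F : ι → EuclideanSpace ℝ (Fin 4) → ℝ}
    (hf : ∀ j ∈ s, DifferentiableAt ℝ (F j) x) :
    pd i (fun y => ∑ j ∈ s, F j y) x = ∑ j ∈ s, pd i (F j) x := by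
  unfold pd; rw [fderiv_fun_sum hf]; simp

lemma eul_mul (hf : DifferentiableAt ℝ f x) (hg : DifferentiableAt ℝ g x) :
    eul (fun y => f y * g y) x = f x * eul g x + g x * eul f x := by
  unfold eul
  simp only [pd_mul _ hf hg, Finset.mul_sum, ← Finset.sum_add_distrib]
  exact Finset.sum_congr rfl fun i _ => by ring

lemma normsq_eq (x : EuclideanSpace ℝ (Fin 4)) : ‖x‖ ^ 2 = ∑ i, x i ^ 2 := by
  rw [EuclideanSpace.norm_sq_eq]; simp

/-- The partial derivatives of a function whose gradient at `x` is `c x`. -/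
lemma pd_radial {c : ℝ} (i : Fin 4) (hf : HasFDerivAt f (c • innerSL ℝ x) x) :
    pd i f x = c * x i := by
  unfold pd; rw [hf.fderiv]; simp [EuclideanSpace.inner_single_right]

lemma eul_radial {c : ℝ} (hf : HasFDerivAt f (c • innerSL ℝ x) x) : eul f x = c * ‖x‖ ^ 2 := by
  unfold eul
  simp only [pd_radial _ hf, normsq_eq, Finset.mul_sum]
  exact Finset.sum_congr rfl fun i _ => by ring

/-- `div (x G) = 4 G + D G` in four dimensions. -/
lemma div_coord_mul (hg : DifferentiableAt ℝ g x) :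
    ∑ i, pd i (fun y => y i * g y) x = 4 * g x + eul g x := by
  unfold eul
  simp only [pd_mul _ (diff_coord _) hg, pd_coord, if_true, Finset.sum_add_distrib]
  simp
  ring

lemma smooth_pd (i : Fin 4) (hf : ContDiff ℝ ∞ f) : ContDiff ℝ ∞ (pd i f) :=
  (hf.fderiv_right (m := ∞) (by simp)).clm_apply contDiff_const

lemma pd_comm (i j : Fin 4) (hf : ContDiff ℝ ∞ f) : pd i (pd j f) x = pd j (pd i f) x := by
  have h := (hf.contDiffAt (x := x)).isSymmSndFDerivAt (by
    simp; exact WithTop.coe_le_coe.2 (le_top : (2 : ℕ∞) ≤ ⊤))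
  have hd : DifferentiableAt ℝ (fderiv ℝ f) x :=
    ((hf.fderiv_right (m := ∞) (by simp)).differentiable (by simp)) x
  have key : ∀ a b : Fin 4, pd a (pd b f) x =
      fderiv ℝ (fderiv ℝ f) x (EuclideanSpace.single a 1) (EuclideanSpace.single b 1) := by
    intro a b
    change fderiv ℝ (fun y => fderiv ℝ f y (EuclideanSpace.single b 1)) x _ = _
    rw [fderiv_clm_apply hd (differentiableAt_const _)]
    simp
  rw [key, key]; exact h _ _

lemma Adm.diff (h : Adm K f) : DifferentiableAt ℝ f x := h.smooth.differentiable (by simp) x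

lemma Adm.eventually (h : Adm K f) (hK : IsClosed K) (hx : x ∉ K) : f =ᶠ[𝓝 x] fun _ => 0 := by
  filter_upwards [hK.isOpen_compl.mem_nhds hx] with y hy using h.zero y hy

lemma Adm.pd (h : Adm K f) (hK : IsClosed K) (i : Fin 4) : Adm K (pd i f) := by
  refine ⟨smooth_pd i h.smooth, fun x hx => ?_⟩
  rw [pd_congr i (h.eventually hK hx)]
  simp [_root_.pd]

lemma Adm.add (h : Adm K f) (h' : Adm K g) : Adm K (fun x => f x + g x) :=
  ⟨h.smooth.add h'.smooth, fun x hx => by simp [h.zero x hx, h'.zero x hx]⟩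

lemma Adm.sum {ι : Type} {s : Finset ι} {F : ι → EuclideanSpace ℝ (Fin 4) → ℝ}
    (h : ∀ i ∈ s, Adm K (F i)) : Adm K (fun x => ∑ i ∈ s, F i x) :=
  ⟨ContDiff.sum fun i hi => (h i hi).smooth,
    fun x hx => Finset.sum_eq_zero fun i hi => (h i hi).zero x hx⟩

/-- A factor only needs to be smooth near `K`. -/
lemma Adm.mul_left (h : Adm K f) (hK : IsClosed K) (hg : ∀ x ∈ K, ContDiffAt ℝ ∞ g x) :
    Adm K (fun x => g x * f x) := by
  refine ⟨contDiff_iff_contDiffAt.2 fun x => ?_, fun x hx => by simp [h.zero x hx]⟩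
  by_cases hx : x ∈ K
  · exact (hg x hx).mul h.smooth.contDiffAt
  · refine (contDiffAt_const (c := (0 : ℝ))).congr_of_eventuallyEq ?_
    filter_upwards [h.eventually hK hx] with y hy
    simp [hy]

lemma Adm.eul (h : Adm K f) (hK : IsClosed K) : Adm K (eul f) :=
  Adm.sum fun i _ => (h.pd hK i).mul_left hK fun _ _ => (smooth_coord i).contDiffAt

lemma Adm.lap (h : Adm K f) (hK : IsClosed K) : Adm K (lap f) :=
  Adm.sum fun i _ => (h.pd hK i).pd hK i

lemma Adm.hasCompactSupport (h : Adm K f) (hK : IsCompact K) : HasCompactSupport f :=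
  HasCompactSupport.intro hK h.zero

lemma Adm.integrable (h : Adm K f) (hK : IsCompact K) : Integrable f :=
  h.smooth.continuous.integrable_of_hasCompactSupport (h.hasCompactSupport hK)

lemma Adm.integral_pd (h : Adm K f) (hK : IsCompact K) (i : Fin 4) : ∫ x, _root_.pd i f x = 0 := by
  have := integral_mul_fderiv_eq_neg_fderiv_mul_of_integrable (μ := volume)
    (f := fun _ : EuclideanSpace ℝ (Fin 4) => (1 : ℝ)) (g := f)
    (v := EuclideanSpace.single i 1) (by simp)
    (by simpa using (show Integrable (fun x => fderiv ℝ f x (EuclideanSpace.single i 1)) volume from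
      (h.pd hK.isClosed i).integrable hK)) (by simpa using h.integrable hK)
    (fun x _ => by simp) (fun x _ => h.diff)
  simpa [_root_.pd] using this

/-- The divergence theorem for smooth compactly supported vector fields. -/
lemma integral_div {F : Fin 4 → EuclideanSpace ℝ (Fin 4) → ℝ} (h : ∀ i, Adm K (F i))
    (hK : IsCompact K) : ∫ x, ∑ i, pd i (F i) x = 0 := by
  rw [integral_finsetSum _ fun i _ => ((h i).pd hK.isClosed i).integrable hK]
  simp [fun i => (h i).integral_pd hK i]

lemma smoothAt_rho (hx : x ≠ 0) :
    ContDiffAt ℝ ∞ (fun y : EuclideanSpace ℝ (Fin 4) => (‖y‖ ^ 2)⁻¹) x :=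
  ((contDiff_norm_sq ℝ).contDiffAt).inv (by simpa using hx)

lemma hasFDeriv_rho (hx : x ≠ 0) :
    HasFDerivAt (fun y : EuclideanSpace ℝ (Fin 4) => (‖y‖ ^ 2)⁻¹)
      ((-2 * (‖x‖ ^ 2)⁻¹ ^ 2) • innerSL ℝ x) x := by
  have h := (hasDerivAt_inv (x := ‖x‖ ^ 2) (by simpa using hx)).comp_hasFDerivAt x
    (hasStrictFDerivAt_norm_sq x).hasFDerivAt
  refine h.congr_fderiv ?_
  ext v
  simp
  ring

end Calculus

/-! ### Two integral identities off the origin -/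

section Rellich

variable {K : Set (EuclideanSpace ℝ (Fin 4))} {f g : EuclideanSpace ℝ (Fin 4) → ℝ}
  {x : EuclideanSpace ℝ (Fin 4)}

/-- The function `|x|⁻² Δf Df - 2 |x|⁻⁴ (Df)²`, the divergence of a Pohozaev type vector field. -/
noncomputable def poho (f : EuclideanSpace ℝ (Fin 4) → ℝ) : EuclideanSpace ℝ (Fin 4) → ℝ :=
  fun x => (‖x‖ ^ 2)⁻¹ * (lap f x * eul f x) - 2 * ((‖x‖ ^ 2)⁻¹ ^ 2 * (eul f x) ^ 2)

lemma ne_zero_of_mem (h0 : (0 : EuclideanSpace ℝ (Fin 4)) ∉ K) (hx : x ∈ K) : x ≠ 0 :=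
  fun h => h0 (h ▸ hx)

/-- Half the squared gradient, weighted by `|x|⁻²`. -/
noncomputable def gradEnergy (f : EuclideanSpace ℝ (Fin 4) → ℝ) : EuclideanSpace ℝ (Fin 4) → ℝ :=
  fun x => (‖x‖ ^ 2)⁻¹ * ∑ j, 1 / 2 * (pd j f x * pd j f x)

lemma adm_gradEnergy (h : Adm K f) (hK : IsClosed K) (h0 : 0 ∉ K) : Adm K (gradEnergy f) :=
  (Adm.sum fun j _ => ((h.pd hK j).mul_left hK
    fun _ _ => (h.pd hK j).smooth.contDiffAt).mul_left hK fun _ _ => contDiffAt_const).mul_left hK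
    fun _ hx => smoothAt_rho (ne_zero_of_mem h0 hx)

lemma adm_flux (h : Adm K f) (hK : IsClosed K) (h0 : 0 ∉ K) (i : Fin 4) :
    Adm K (fun y => (‖y‖ ^ 2)⁻¹ * (eul f y * pd i f y)) :=
  ((h.pd hK i).mul_left hK fun _ _ => (h.eul hK).smooth.contDiffAt).mul_left hK
    fun _ hx => smoothAt_rho (ne_zero_of_mem h0 hx)

lemma adm_poho (h : Adm K f) (hK : IsClosed K) (h0 : 0 ∉ K) : Adm K (poho f) := by
  have hr : ∀ x ∈ K, ContDiffAt ℝ ∞ (fun y : EuclideanSpace ℝ (Fin 4) => (‖y‖ ^ 2)⁻¹) x :=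
    fun x hx => smoothAt_rho (ne_zero_of_mem h0 hx)
  have h1 := ((h.eul hK).mul_left hK (g := lap f)
    fun _ _ => (h.lap hK).smooth.contDiffAt).mul_left hK hr
  have h2 := (((h.eul hK).mul_left hK (g := eul f)
    fun _ _ => (h.eul hK).smooth.contDiffAt).mul_left hK fun x hx => (hr x hx).pow 2).mul_left hK
    (g := fun _ => (-2 : ℝ)) fun _ _ => contDiffAt_const
  have := h1.add h2
  convert this using 2
  unfold poho
  ring

/-- `poho f` is the divergence of `|x|⁻² Df ∇f - ½ |x|⁻² |∇f|² x`; the two parts of the field are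
kept on separate sides. -/
lemma poho_eq_div (h : Adm K f) (hK : IsClosed K) (h0 : 0 ∉ K) (x : EuclideanSpace ℝ (Fin 4)) :
    ∑ i, pd i (fun y => (‖y‖ ^ 2)⁻¹ * (eul f y * pd i f y)) x =
      poho f x + ∑ i, pd i (fun y => y i * gradEnergy f y) x := by
  by_cases hx : x ∈ K
  swap
  · have e1 : ∀ i, pd i (fun y => (‖y‖ ^ 2)⁻¹ * (eul f y * pd i f y)) x = 0 :=
      fun i => ((adm_flux h hK h0 i).pd hK i).zero x hx
    have e2 : ∀ i, pd i (fun y => y i * gradEnergy f y) x = 0 := fun i =>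
      (((adm_gradEnergy h hK h0).mul_left hK
        (fun _ _ => (smooth_coord i).contDiffAt)).pd hK i).zero x hx
    simp [e1, e2, (adm_poho h hK h0).zero x hx]
  have hx0 := ne_zero_of_mem h0 hx
  have hp := fun i => h.pd hK i
  have hr := hasFDeriv_rho hx0
  have hD := h.eul hK
  have dpp : ∀ i, DifferentiableAt ℝ (fun y => pd i f y * pd i f y) x :=
    fun i => (hp i).diff.mul (hp i).diff
  have dS : DifferentiableAt ℝ (fun y => ∑ j, 1 / 2 * (pd j f y * pd j f y)) x :=
    DifferentiableAt.fun_sum fun j _ => (dpp j).const_mul _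
  rw [div_coord_mul (adm_gradEnergy h hK h0).diff]
  have eS : eul (gradEnergy f) x = (‖x‖ ^ 2)⁻¹ * ∑ i, x i * ∑ j, pd j f x * pd i (pd j f) x +
      (∑ j, 1 / 2 * (pd j f x * pd j f x)) * (-2 * (‖x‖ ^ 2)⁻¹) := by
    unfold gradEnergy
    rw [eul_mul hr.differentiableAt dS, eul_radial hr]
    congr 1
    · congr 1
      unfold eul
      refine Finset.sum_congr rfl fun i _ => ?_
      rw [pd_sum _ _ fun j _ => (dpp j).const_mul _]
      congr 1
      refine Finset.sum_congr rfl fun j _ => ?_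
      rw [pd_mul i (differentiableAt_const _) (dpp j), pd_mul i (hp j).diff (hp j).diff]
      simp [pd]
      ring
    · have : ‖x‖ ^ 2 ≠ 0 := by simpa using hx0
      field_simp
  have eF : ∀ i, pd i (fun y => (‖y‖ ^ 2)⁻¹ * (eul f y * pd i f y)) x =
      (‖x‖ ^ 2)⁻¹ * (eul f x * pd i (pd i f) x +
        pd i f x * (pd i f x + ∑ j, x j * pd j (pd i f) x)) +
        (eul f x * pd i f x) * (-2 * (‖x‖ ^ 2)⁻¹ ^ 2 * x i) := by
    intro i
    rw [pd_mul i hr.differentiableAt (hD.diff.fun_mul (hp i).diff), pd_mul i hD.diff (hp i).diff,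
      pd_radial i hr]
    congr 4
    unfold eul
    rw [pd_sum _ _ fun j _ => (diff_coord j).fun_mul (hp j).diff]
    simp only [pd_mul i (diff_coord _) (hp _).diff, pd_coord, Finset.sum_add_distrib]
    rw [Finset.sum_congr rfl fun j _ => congrArg (x j * ·) (pd_comm (x := x) i j h.smooth)]
    simp
    ring
  simp only [eF, eS]
  unfold poho gradEnergy
  rw [lap_eq]
  have hc := fun i j => pd_comm (x := x) i j h.smooth
  unfold eul
  simp only [Fin.sum_univ_four]
  rw [hc 1 0, hc 2 0, hc 3 0, hc 2 1, hc 3 1, hc 3 2]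
  ring

lemma integral_poho (h : Adm K f) (hK : IsCompact K) (h0 : 0 ∉ K) : ∫ x, poho f x = 0 := by
  have hc := hK.isClosed
  have a1 := fun i => adm_flux h hc h0 i
  have a2 := fun i => (adm_gradEnergy h hc h0).mul_left hc
        (fun _ _ => (smooth_coord i).contDiffAt)
  have h1 := integral_div a1 hK
  simp only [poho_eq_div h hc h0] at h1
  rw [integral_add ((adm_poho h hc h0).integrable hK)
    ((Adm.sum fun i _ => (a2 i).pd hc i).integrable hK), integral_div a2 hK] at h1
  simpa using h1

/-- `∫ |x|⁻⁴ Df = 0`: the vector field `|x|⁻⁴ x` is divergence free off the origin. -/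
lemma integral_eul (h : Adm K f) (hK : IsCompact K) (h0 : 0 ∉ K) :
    ∫ x, (‖x‖ ^ 2)⁻¹ ^ 2 * eul f x = 0 := by
  have hc := hK.isClosed
  have hr : ∀ x ∈ K, ContDiffAt ℝ ∞ (fun y : EuclideanSpace ℝ (Fin 4) => (‖y‖ ^ 2)⁻¹) x :=
    fun x hx => smoothAt_rho (ne_zero_of_mem h0 hx)
  have hg := (h.mul_left hc hr).mul_left hc hr
  have h1 := integral_div (fun i => hg.mul_left hc fun _ _ => (smooth_coord i).contDiffAt) hK
  rw [← h1]
  congr 1 with x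
  by_cases hx : x ∈ K
  · have hx0 := ne_zero_of_mem h0 hx
    have hd := hasFDeriv_rho hx0
    have : ‖x‖ ^ 2 ≠ 0 := by simpa using hx0
    rw [div_coord_mul hg.diff, eul_mul hd.differentiableAt (hd.differentiableAt.fun_mul h.diff),
      eul_mul hd.differentiableAt h.diff, eul_radial hd]
    field_simp
    ring
  · rw [(h.eul hc).zero x hx]
    symm
    simpa using Finset.sum_eq_zero fun i _ =>
      ((hg.mul_left hc fun _ _ => (smooth_coord i).contDiffAt).pd hc i).zero x hx

end Rellich

/-! ### Comparison of `‖Δ(u/E₂)‖₂²` with `Ĩ₄` -/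

section Comparison

variable {K : Set (EuclideanSpace ℝ (Fin 4))} {u f g : EuclideanSpace ℝ (Fin 4) → ℝ}
  {x : EuclideanSpace ℝ (Fin 4)} {R : ℝ}

/-- The pointwise quadratic inequality behind `lap_div_E2_sq_le`. With `w = u/E₂`, the left-hand side
is `(Δw - 2|x|⁻²Dw)² + 4|x|⁻⁴(Dw)²` in the variables
`m = Δu - 2|x|⁻²Du`, `p = -|x|⁻²(Du + u/(2E₁))`, `y = |x|⁻² u/(E₁E₂)`, `b = 1/E₂`,
`c = 1/(E₁E₂²)`. -/
lemma quad_ineq {m p y b c : ℝ} (hb0 : 0 ≤ b) (hb1 : b ≤ 1) (hc0 : 0 ≤ c) (hc1 : c ≤ 1) :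
    (b * m - 2 * c * p + 2 * c * y) ^ 2 + 4 * (b * p + (1 / 2 - b) * y) ^ 2 ≤
      14 * m ^ 2 + 56 * p ^ 2 + 52 / 3 * (y ^ 2 - 2 * p * y) := by
  have hb2 : b ^ 2 ≤ 1 := pow_le_one₀ hb0 hb1
  have hc2 : c ^ 2 ≤ 1 := pow_le_one₀ hc0 hc1
  have hd2 : (1 / 2 - b) ^ 2 ≤ 1 / 4 := by nlinarith
  -- Cauchy-Schwarz with the weights 1/10 + 3/10 + 6/10 = 1
  have h1 : (b * m - 2 * c * p + 2 * c * y) ^ 2 ≤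
      10 * (b * m) ^ 2 + 10 / 3 * (2 * c * p) ^ 2 + 10 / 6 * (2 * c * y) ^ 2 := by
    nlinarith [sq_nonneg (3 * (b * m) + 2 * c * p), sq_nonneg (6 * (b * m) - 2 * c * y),
      sq_nonneg (2 * (2 * c * p) + 2 * c * y)]
  have h2 : (b * p + (1 / 2 - b) * y) ^ 2 ≤ 2 * (b * p) ^ 2 + 2 * ((1 / 2 - b) * y) ^ 2 := by
    nlinarith [sq_nonneg (b * p - (1 / 2 - b) * y)]
  have k1 := mul_le_mul_of_nonneg_right hb2 (sq_nonneg m)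
  have k2 := mul_le_mul_of_nonneg_right hc2 (sq_nonneg p)
  have k3 := mul_le_mul_of_nonneg_right hc2 (sq_nonneg y)
  have k4 := mul_le_mul_of_nonneg_right hb2 (sq_nonneg p)
  have k5 := mul_le_mul_of_nonneg_right hd2 (sq_nonneg y)
  nlinarith [sq_nonneg (y - 2 * p), sq_nonneg m]

/-- In this lemma and the following ones, a functional `c • innerSL ℝ x` encodes the gradient
`c x` of a radial function at `x`. -/
lemma radial_comp {c φ' : ℝ} {φ : ℝ → ℝ} (hφ : HasDerivAt φ φ' (f x))
    (hf : HasFDerivAt f (c • innerSL ℝ x) x) :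
    HasFDerivAt (fun y => φ (f y)) ((φ' * c) • innerSL ℝ x) x := by
  have := hφ.comp_hasFDerivAt x hf
  rwa [smul_smul] at this

lemma radial_mul {c d : ℝ} (hf : HasFDerivAt f (c • innerSL ℝ x) x)
    (hg : HasFDerivAt g (d • innerSL ℝ x) x) :
    HasFDerivAt (fun y => f y * g y) ((f x * d + g x * c) • innerSL ℝ x) x := by
  have := hf.mul hg
  rwa [smul_smul, smul_smul, ← add_smul] at this

lemma E1_eventually (hR : 0 < R) (hx : x ≠ 0) :
    (fun y : EuclideanSpace ℝ (Fin 4) => E1 (‖y‖ / R)) =ᶠ[𝓝 x]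
      fun y => 1 + Real.log R - 1 / 2 * Real.log (‖y‖ ^ 2) := by
  filter_upwards [isOpen_ne.mem_nhds hx] with y hy
  rw [E1, Real.log_div (by simpa using hy) hR.ne', Real.log_pow]
  push_cast; ring

lemma smoothAt_E1 (hR : 0 < R) (hx : x ≠ 0) :
    ContDiffAt ℝ ∞ (fun y : EuclideanSpace ℝ (Fin 4) => E1 (‖y‖ / R)) x := by
  refine ContDiffAt.congr_of_eventuallyEq ?_ (E1_eventually hR hx)
  exact contDiffAt_const.sub (contDiffAt_const.mul
    ((contDiff_norm_sq ℝ).contDiffAt.log (by simpa using hx)))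

lemma hasFDeriv_E1 (hR : 0 < R) (hx : x ≠ 0) :
    HasFDerivAt (fun y : EuclideanSpace ℝ (Fin 4) => E1 (‖y‖ / R))
      ((-(‖x‖ ^ 2)⁻¹) • innerSL ℝ x) x := by
  refine HasFDerivAt.congr_of_eventuallyEq ?_ (E1_eventually hR hx)
  have h := ((hasStrictFDerivAt_norm_sq x).hasFDerivAt.log (by simpa using hx)).const_mul (1 / 2)
  refine (h.const_sub (1 + Real.log R)).congr_fderiv ?_
  ext v
  simp
  ring

lemma one_le_E1 (hR : 0 < R) (hxR : ‖x‖ ≤ R) : 1 ≤ E1 (‖x‖ / R) := by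
  have := Real.log_nonpos (div_nonneg (norm_nonneg x) hR.le) ((div_le_one hR).2 hxR)
  unfold E1; linarith

lemma one_le_E2 (hR : 0 < R) (hxR : ‖x‖ ≤ R) : 1 ≤ E2 (‖x‖ / R) := by
  have := Real.log_nonneg (one_le_E1 hR hxR)
  unfold E2; linarith

lemma smoothAt_E2 (hR : 0 < R) (hx : x ≠ 0) (hxR : ‖x‖ ≤ R) :
    ContDiffAt ℝ ∞ (fun y : EuclideanSpace ℝ (Fin 4) => E2 (‖y‖ / R)) x :=
  contDiffAt_const.add ((smoothAt_E1 hR hx).log (by linarith [one_le_E1 hR hxR]))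

lemma hasFDeriv_E1_inv (hR : 0 < R) (hx : x ≠ 0) (hxR : ‖x‖ ≤ R) :
    HasFDerivAt (fun y : EuclideanSpace ℝ (Fin 4) => (E1 (‖y‖ / R))⁻¹)
      (((‖x‖ ^ 2)⁻¹ * (E1 (‖x‖ / R))⁻¹ ^ 2) • innerSL ℝ x) x := by
  have := radial_comp (hasDerivAt_inv (by linarith [one_le_E1 hR hxR] : E1 (‖x‖ / R) ≠ 0))
    (hasFDeriv_E1 hR hx)
  convert this using 2
  rw [inv_pow]; ring

lemma hasFDeriv_E2_inv (hR : 0 < R) (hx : x ≠ 0) (hxR : ‖x‖ ≤ R) :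
    HasFDerivAt (fun y : EuclideanSpace ℝ (Fin 4) => (E2 (‖y‖ / R))⁻¹)
      (((‖x‖ ^ 2)⁻¹ * ((E1 (‖x‖ / R))⁻¹ * (E2 (‖x‖ / R))⁻¹ ^ 2)) • innerSL ℝ x) x := by
  have h1 := radial_comp (φ := fun t => 1 + Real.log t)
    ((Real.hasDerivAt_log (by linarith [one_le_E1 hR hxR] : E1 (‖x‖ / R) ≠ 0)).const_add 1)
    (hasFDeriv_E1 hR hx)
  have := radial_comp (φ := fun t => t⁻¹) (f := fun y => 1 + Real.log (E1 (‖y‖ / R)))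
    (hasDerivAt_inv (by have := one_le_E2 hR hxR; unfold E2 at this; linarith)) h1
  refine HasFDerivAt.congr_fderiv this ?_
  congr 1
  simp only [E2, inv_pow]; ring

/-- `|x|⁻² / (E₁ E₂²)`: the gradient of `1/E₂` at `x` is this function times `x`. -/
noncomputable def gradFactor (R : ℝ) (x : EuclideanSpace ℝ (Fin 4)) : ℝ :=
  (‖x‖ ^ 2)⁻¹ * ((E1 (‖x‖ / R))⁻¹ * (E2 (‖x‖ / R))⁻¹ ^ 2)

lemma smoothAt_gradFactor (hR : 0 < R) (hx : x ≠ 0) (hxR : ‖x‖ ≤ R) :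
    ContDiffAt ℝ ∞ (gradFactor R) x :=
  (smoothAt_rho hx).mul (((smoothAt_E1 hR hx).inv (by linarith [one_le_E1 hR hxR])).mul
    (((smoothAt_E2 hR hx hxR).inv (by linarith [one_le_E2 hR hxR])).pow 2))

lemma eul_gradFactor (hR : 0 < R) (hx : x ≠ 0) (hxR : ‖x‖ ≤ R) :
    eul (gradFactor R) x = gradFactor R x *
      (-2 + (E1 (‖x‖ / R))⁻¹ + 2 * ((E1 (‖x‖ / R))⁻¹ * (E2 (‖x‖ / R))⁻¹)) := by
  have hb := hasFDeriv_E2_inv hR hx hxR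
  have h := radial_mul (hasFDeriv_rho hx) (radial_mul (hasFDeriv_E1_inv hR hx hxR)
    (radial_mul hb hb))
  have e : gradFactor R = fun y => (‖y‖ ^ 2)⁻¹ *
      ((E1 (‖y‖ / R))⁻¹ * ((E2 (‖y‖ / R))⁻¹ * (E2 (‖y‖ / R))⁻¹)) := by
    ext y; unfold gradFactor; ring
  rw [e, eul_radial h]
  have : ‖x‖ ^ 2 ≠ 0 := by simpa using hx
  beta_reduce
  generalize (E1 (‖x‖ / R))⁻¹ = a
  generalize (E2 (‖x‖ / R))⁻¹ = b
  field_simp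
  ring

lemma adm_div_E2 (h : Adm K u) (hK : IsClosed K) (h0 : 0 ∉ K) (hR : 0 < R)
    (hKR : ∀ x ∈ K, ‖x‖ ≤ R) : Adm K (fun y => (E2 (‖y‖ / R))⁻¹ * u y) :=
  h.mul_left hK fun x hx => (smoothAt_E2 hR (ne_zero_of_mem h0 hx) (hKR x hx)).inv
    (by linarith [one_le_E2 hR (hKR x hx)])

lemma pd_div_E2 (h : Adm K u) (hK : IsClosed K) (h0 : 0 ∉ K) (hR : 0 < R)
    (hKR : ∀ x ∈ K, ‖x‖ ≤ R) (i : Fin 4) :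
    pd i (fun y => (E2 (‖y‖ / R))⁻¹ * u y) =
      fun y => (E2 (‖y‖ / R))⁻¹ * pd i u y + y i * (gradFactor R y * u y) := by
  ext x
  by_cases hx : x ∈ K
  · have hb := hasFDeriv_E2_inv hR (ne_zero_of_mem h0 hx) (hKR x hx)
    rw [pd_mul i hb.differentiableAt h.diff, pd_radial i hb, gradFactor]
    ring
  · rw [((adm_div_E2 h hK h0 hR hKR).pd hK i).zero x hx, (h.pd hK i).zero x hx, h.zero x hx]
    simp

lemma lap_div_E2 (h : Adm K u) (hK : IsClosed K) (h0 : 0 ∉ K) (hR : 0 < R)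
    (hKR : ∀ x ∈ K, ‖x‖ ≤ R) (hx : x ∈ K) :
    lap (fun y => (E2 (‖y‖ / R))⁻¹ * u y) x =
      (E2 (‖x‖ / R))⁻¹ * lap u x + 2 * gradFactor R x * eul u x + u x * (gradFactor R x *
        (2 + (E1 (‖x‖ / R))⁻¹ + 2 * ((E1 (‖x‖ / R))⁻¹ * (E2 (‖x‖ / R))⁻¹))) := by
  have hx0 := ne_zero_of_mem h0 hx
  have hb := hasFDeriv_E2_inv hR hx0 (hKR x hx)
  have hg : DifferentiableAt ℝ (gradFactor R) x :=
    (smoothAt_gradFactor hR hx0 (hKR x hx)).differentiableAt (by simp)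
  have hgu := hg.fun_mul h.diff
  rw [lap_eq]
  simp only [pd_div_E2 h hK h0 hR hKR]
  have e : ∀ i, pd i (fun y => (E2 (‖y‖ / R))⁻¹ * pd i u y + y i * (gradFactor R y * u y)) x =
      (E2 (‖x‖ / R))⁻¹ * pd i (pd i u) x + gradFactor R x * (x i * pd i u x) +
        pd i (fun y => y i * (gradFactor R y * u y)) x := by
    intro i
    rw [pd_add i (hb.differentiableAt.fun_mul (h.pd hK i).diff) ((diff_coord i).fun_mul hgu),
      pd_mul i hb.differentiableAt (h.pd hK i).diff, pd_radial i hb]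
    unfold gradFactor
    ring
  simp only [e, Finset.sum_add_distrib, ← Finset.mul_sum]
  rw [div_coord_mul hgu, eul_mul hg h.diff, eul_gradFactor hR hx0 (hKR x hx), lap_eq]
  change _ + _ * eul u x + _ = _
  ring

/-- The key estimate `‖Δ(u/E₂)‖² ≤ 14 Ĩ₄`. -/
lemma lap_div_E2_sq_le (h : Adm K u) (hK : IsCompact K) (h0 : 0 ∉ K) (hR : 0 < R)
    (hKR : ∀ x ∈ K, ‖x‖ ≤ R) :
    ∫ x, lap (fun y => (E2 (‖y‖ / R))⁻¹ * u y) x ^ 2 ≤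
      14 * ((∫ x, lap u x ^ 2) - ∫ x, (u x) ^ 2 / (‖x‖ ^ 4 * (E1 (‖x‖ / R)) ^ 2)) := by
  have hc := hK.isClosed
  set w : EuclideanSpace ℝ (Fin 4) → ℝ := fun y => (E2 (‖y‖ / R))⁻¹ * u y with hw
  have aw : Adm K w := adm_div_E2 h hc h0 hR hKR
  have sa : ∀ x ∈ K, ContDiffAt ℝ ∞ (fun y : EuclideanSpace ℝ (Fin 4) => (E1 (‖y‖ / R))⁻¹) x :=
    fun x hx => (smoothAt_E1 hR (ne_zero_of_mem h0 hx)).inv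
      (by linarith [one_le_E1 hR (hKR x hx)])
  have sr : ∀ x ∈ K, ContDiffAt ℝ ∞ (fun y : EuclideanSpace ℝ (Fin 4) => (‖y‖ ^ 2)⁻¹) x :=
    fun x hx => smoothAt_rho (ne_zero_of_mem h0 hx)
  have sq : ∀ {f}, Adm K f → Adm K (fun y => f y ^ 2) := fun {f} hf => by
    simpa only [pow_two] using hf.mul_left hc fun _ _ => hf.smooth.contDiffAt
  have aF : Adm K (fun y => (E1 (‖y‖ / R))⁻¹ * (u y * u y)) :=
    (h.mul_left hc fun _ _ => h.smooth.contDiffAt).mul_left hc sa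
  have aG : Adm K (fun y => (E1 (‖y‖ / R))⁻¹ * (w y * u y)) :=
    (h.mul_left hc fun _ _ => aw.smooth.contDiffAt).mul_left hc sa
  have aV : Adm K (fun y => ((‖y‖ ^ 2)⁻¹ * ((E1 (‖y‖ / R))⁻¹ * u y)) ^ 2) :=
    sq ((h.mul_left hc sa).mul_left hc sr)
  have aL := sq (h.lap hc)
  have aLw := sq (aw.lap hc)
  have iN := (adm_poho h hc h0).integrable hK
  have iNw := (adm_poho aw hc h0).integrable hK
  have ieul : ∀ {f}, Adm K f → Integrable (fun x => (‖x‖ ^ 2)⁻¹ ^ 2 * eul f x) := fun hf =>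
    ((hf.eul hc).mul_left hc fun x hx => (sr x hx).pow 2).integrable hK
  have eV : (fun x => (u x) ^ 2 / (‖x‖ ^ 4 * (E1 (‖x‖ / R)) ^ 2)) =
      fun y => ((‖y‖ ^ 2)⁻¹ * ((E1 (‖y‖ / R))⁻¹ * u y)) ^ 2 := by
    ext y
    rw [div_eq_mul_inv, mul_inv, mul_pow, mul_pow, ← inv_pow, ← inv_pow, ← inv_pow]; ring
  -- after the first term, the right-hand side consists of multiples of functions of integral zero;
  -- the multiples are those that turn the inequality into `quad_ineq`
  have pw : ∀ x, lap w x ^ 2 ≤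
      14 * (lap u x ^ 2 - ((‖x‖ ^ 2)⁻¹ * ((E1 (‖x‖ / R))⁻¹ * u x)) ^ 2) + (4 * poho w x +
      (28 * ((‖x‖ ^ 2)⁻¹ ^ 2 * eul (fun y => (E1 (‖y‖ / R))⁻¹ * (u y * u y)) x) +
      (-56 * poho u x +
      52 / 3 * ((‖x‖ ^ 2)⁻¹ ^ 2 * eul (fun y => (E1 (‖y‖ / R))⁻¹ * (w y * u y)) x)))) := by
    intro x
    by_cases hx : x ∈ K
    swap
    · simp [(aw.lap hc).zero x hx, (h.lap hc).zero x hx, h.zero x hx,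
        (adm_poho h hc h0).zero x hx, (adm_poho aw hc h0).zero x hx,
        (aF.eul hc).zero x hx, (aG.eul hc).zero x hx]
    have hx0 := ne_zero_of_mem h0 hx
    have hxR := hKR x hx
    have ha := hasFDeriv_E1_inv hR hx0 hxR
    have hb := hasFDeriv_E2_inv hR hx0 hxR
    have hs : (‖x‖ ^ 2)⁻¹ * ‖x‖ ^ 2 = 1 := inv_mul_cancel₀ (by simpa using hx0)
    have ew : eul w x = (E2 (‖x‖ / R))⁻¹ * eul u x +
        u x * ((E1 (‖x‖ / R))⁻¹ * (E2 (‖x‖ / R))⁻¹ ^ 2) := by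
      rw [hw, eul_mul hb.differentiableAt h.diff, eul_radial hb]
      linear_combination (u x * ((E1 (‖x‖ / R))⁻¹ * (E2 (‖x‖ / R))⁻¹ ^ 2)) * hs
    rw [eul_mul ha.differentiableAt (h.diff.fun_mul h.diff), eul_mul h.diff h.diff,
      eul_mul ha.differentiableAt (aw.diff.fun_mul h.diff), eul_mul aw.diff h.diff,
      eul_radial ha]
    unfold poho
    rw [ew, lap_div_E2 h hc h0 hR hKR hx]
    simp only [hw, gradFactor]
    have ha1 := one_le_E1 hR hxR
    have hb1 := one_le_E2 hR hxR
    have a0 : 0 ≤ (E1 (‖x‖ / R))⁻¹ := by positivity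
    have a1 : (E1 (‖x‖ / R))⁻¹ ≤ 1 := inv_le_one_of_one_le₀ ha1
    have b0 : 0 ≤ (E2 (‖x‖ / R))⁻¹ := by positivity
    have b1 : (E2 (‖x‖ / R))⁻¹ ≤ 1 := inv_le_one_of_one_le₀ hb1
    generalize (E1 (‖x‖ / R))⁻¹ = a at *
    generalize (E2 (‖x‖ / R))⁻¹ = b at *
    generalize ‖x‖ ^ 2 = s at *
    generalize s⁻¹ = r at *
    generalize lap u x = L
    generalize eul u x = δ
    generalize u x = U
    have c1 : a * b ^ 2 ≤ 1 := mul_le_one₀ a1 (by positivity) (pow_le_one₀ b0 b1)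
    have key := quad_ineq (m := L - 2 * (r * δ)) (p := -(r * δ + r * U * a / 2))
      (y := r * U * a * b) b0 b1 (by positivity) c1
    have hsa : r * a ^ 2 * s = a ^ 2 := by linear_combination a ^ 2 * hs
    rw [hsa]
    nlinarith [key]
  rw [eV, ← integral_sub (aL.integrable hK) (aV.integrable hK), ← integral_const_mul]
  have i1 : Integrable (fun x => 14 * (lap u x ^ 2 -
      ((‖x‖ ^ 2)⁻¹ * ((E1 (‖x‖ / R))⁻¹ * u x)) ^ 2)) :=
    ((aL.integrable hK).sub (aV.integrable hK)).const_mul _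
  have i4 := (iN.const_mul (-56)).add ((ieul aG).const_mul (52 / 3))
  have i3 := ((ieul aF).const_mul 28).add i4
  have i2 := (iNw.const_mul 4).add i3
  refine (integral_mono (aLw.integrable hK) (i1.add i2) pw).trans (le_of_eq ?_)
  rw [integral_add' i1 i2, integral_add' (iNw.const_mul 4) i3,
    integral_add' ((ieul aF).const_mul 28) i4,
    integral_add' (iN.const_mul (-56)) ((ieul aG).const_mul (52 / 3))]
  simp only [integral_const_mul, integral_poho h hK h0, integral_poho aw hK h0,
    integral_eul aF hK h0, integral_eul aG hK h0]
  simp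

end Comparison

/-! ### The Newton potential bound -/

section Newton

variable {K : Set (EuclideanSpace ℝ (Fin 4))} {w : EuclideanSpace ℝ (Fin 4) → ℝ}

lemma volume_ball_four (x : EuclideanSpace ℝ (Fin 4)) (r : ℝ) (hr : 0 ≤ r) :
    volume (Metric.ball x r) = ENNReal.ofReal (π ^ 2 / 2 * r ^ 4) := by
  rw [EuclideanSpace.volume_ball]
  have h3 : Real.Gamma ((Fintype.card (Fin 4) : ℝ) / 2 + 1) = 2 := by
    norm_num
  rw [h3, ← ENNReal.ofReal_pow hr, ← ENNReal.ofReal_mul (by positivity)]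
  congr 1
  have : √π ^ 4 = π ^ 2 := by
    rw [show (4 : ℕ) = 2 * 2 from rfl, pow_mul, Real.sq_sqrt Real.pi_pos.le]
  simp only [Fintype.card_fin, this]
  ring

/-- Polar coordinates in `ℝ⁴`; the unit sphere has area `2π²`. -/
lemma integral_radial (f : ℝ → ℝ) :
    ∫ x : EuclideanSpace ℝ (Fin 4), f ‖x‖ =
      2 * π ^ 2 * ∫ r in Set.Ioi (0 : ℝ), r ^ 3 * f r := by
  rw [integral_fun_norm_addHaar, Measure.real, volume_ball_four 0 1 zero_le_one,
    ENNReal.toReal_ofReal (by positivity)]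
  simp
  ring

lemma integral_bump : ∫ x : EuclideanSpace ℝ (Fin 4), ((1 + ‖x‖ ^ 2)⁻¹) ^ 3 = π ^ 2 / 2 := by
  rw [integral_radial (fun r => ((1 + r ^ 2)⁻¹) ^ 3)]
  have hd : ∀ r : ℝ, HasDerivAt (fun r : ℝ => r ^ 4 / (4 * (1 + r ^ 2) ^ 2))
      (r ^ 3 * ((1 + r ^ 2)⁻¹) ^ 3) r := by
    intro r
    have hne : (1 + r ^ 2) ≠ 0 := by positivity
    have h := (hasDerivAt_pow 4 r).div ((((hasDerivAt_pow 2 r).const_add 1).pow 2).const_mul 4)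
      (by positivity : (4 * (1 + r ^ 2) ^ 2) ≠ 0)
    refine h.congr_deriv ?_
    simp
    field_simp
    ring
  have ht : Filter.Tendsto (fun r : ℝ => r ^ 4 / (4 * (1 + r ^ 2) ^ 2)) Filter.atTop
      (𝓝 (1 / 4)) := by
    have h1 : Filter.Tendsto (fun r : ℝ => 1 / (4 * ((r ^ 2)⁻¹ + 1) ^ 2)) Filter.atTop
        (𝓝 (1 / (4 * (0 + 1) ^ 2))) :=
      tendsto_const_nhds.div (((((Filter.tendsto_pow_atTop two_ne_zero).inv_tendsto_atTop).add_const
        1).pow 2).const_mul 4) (by norm_num)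
    norm_num at h1
    norm_num
    refine h1.congr' ?_
    filter_upwards [Filter.eventually_gt_atTop 0] with r hr
    field_simp
  rw [integral_Ioi_of_hasDerivAt_of_nonneg' (fun r _ => hd r) (fun r hr => ?_) ht]
  · norm_num; ring
  · have : (0 : ℝ) < r := hr
    positivity

lemma integrable_bump :
    Integrable (fun x : EuclideanSpace ℝ (Fin 4) => ((1 + ‖x‖ ^ 2)⁻¹) ^ 3) := by
  -- the integral of a non-integrable function is `0`, but this one is positive
  by_contra h
  have := integral_bump
  rw [integral_undef h] at this
  have : 0 < π ^ 2 / 2 := by positivity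
  linarith

/-- The regularized Newton kernel `(|y - x|² + δ²)⁻¹`. -/
noncomputable def kern (x : EuclideanSpace ℝ (Fin 4)) (δ : ℝ) (y : EuclideanSpace ℝ (Fin 4)) : ℝ :=
  (‖y - x‖ ^ 2 + δ ^ 2)⁻¹

lemma smooth_kern (x : EuclideanSpace ℝ (Fin 4)) {δ : ℝ} (hδ : 0 < δ) :
    ContDiff ℝ ∞ (kern x δ) := by
  refine (((contDiff_norm_sq ℝ).comp (contDiff_id.sub contDiff_const)).add contDiff_const).inv
    fun y => ?_
  change ‖y - x‖ ^ 2 + δ ^ 2 ≠ 0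
  positivity

lemma pd_kern (x : EuclideanSpace ℝ (Fin 4)) {δ : ℝ} (hδ : 0 < δ) (i : Fin 4)
    (y : EuclideanSpace ℝ (Fin 4)) :
    pd i (kern x δ) y = -2 * kern x δ y ^ 2 * (y i - x i) := by
  have h0 : ‖y - x‖ ^ 2 + δ ^ 2 ≠ 0 := by positivity
  have h1 := ((hasStrictFDerivAt_norm_sq (y - x)).hasFDerivAt.comp y
    ((hasFDerivAt_id y).sub_const x)).add_const (δ ^ 2)
  have h := (hasDerivAt_inv h0).comp_hasFDerivAt y h1
  unfold pd
  have e : fderiv ℝ (kern x δ) y = _ := h.fderiv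
  rw [e]
  simp [kern, EuclideanSpace.inner_single_right]
  ring

/-- Green's identity against the regularized kernel, using `Δ (s+δ²)⁻¹ = -8 δ² (s+δ²)⁻³` for
`s = |y - x|²` in four dimensions. -/
lemma integral_kern (h : Adm K w) (hK : IsCompact K) (x : EuclideanSpace ℝ (Fin 4)) {δ : ℝ}
    (hδ : 0 < δ) :
    ∫ y, kern x δ y * lap w y = -∫ y, 8 * δ ^ 2 * (w y * kern x δ y ^ 3) := by
  have hc := hK.isClosed
  have hk := smooth_kern x hδ
  have dk : ∀ y, DifferentiableAt ℝ (kern x δ) y := fun y => hk.differentiable (by simp) y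
  have hcoord : ∀ i, ContDiff ℝ ∞ (fun y : EuclideanSpace ℝ (Fin 4) => y i - x i) :=
    fun i => (smooth_coord i).sub contDiff_const
  have aw2 : Adm K (fun y => kern x δ y ^ 2 * w y) :=
    h.mul_left hc fun _ _ => (hk.pow 2).contDiffAt
  have a1 : ∀ i, Adm K (fun y => kern x δ y * pd i w y) := fun i =>
    (h.pd hc i).mul_left hc fun _ _ => hk.contDiffAt
  have a2 : ∀ i, Adm K (fun y => (y i - x i) * (2 * (kern x δ y ^ 2 * w y))) := fun i =>
    (aw2.mul_left hc fun _ _ => contDiffAt_const).mul_left hc fun _ _ => (hcoord i).contDiffAt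
  have hdiv := integral_div (fun i => (a1 i).add (a2 i)) hK
  have e : ∀ y, ∑ i, pd i (fun y => kern x δ y * pd i w y +
      (y i - x i) * (2 * (kern x δ y ^ 2 * w y))) y =
      kern x δ y * lap w y + 8 * δ ^ 2 * (w y * kern x δ y ^ 3) := by
    intro y
    have e1 : ∀ i, pd i (fun y => kern x δ y * pd i w y +
      (y i - x i) * (2 * (kern x δ y ^ 2 * w y))) y =
        kern x δ y * pd i (pd i w) y + 2 * (kern x δ y ^ 2 * w y) -
          8 * (kern x δ y ^ 3 * w y) * (y i - x i) ^ 2 := by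
      intro i
      have dsq : DifferentiableAt ℝ (fun y => kern x δ y * kern x δ y) y := (dk y).fun_mul (dk y)
      have hci : pd i (fun y => y i - x i) y = 1 := by
        have h1 := pd_add i (diff_coord (x := y) i)
          (differentiableAt_const (-x i) (𝕜 := ℝ) (x := y))
        simp only [← sub_eq_add_neg] at h1
        rw [h1, pd_coord]
        simp [pd]
      have hin : pd i (fun y => 2 * (kern x δ y ^ 2 * w y)) y =
          2 * (kern x δ y ^ 2 * pd i w y + w y * (2 * kern x δ y * pd i (kern x δ) y)) := by
        rw [pd_mul i (differentiableAt_const _) aw2.diff]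
        simp only [pow_two]
        have h2 : pd i (fun _ => (2 : ℝ)) y = 0 := by simp [pd]
        rw [pd_mul i dsq h.diff, pd_mul i (dk y) (dk y), h2]
        ring
      rw [pd_add i (a1 i).diff (a2 i).diff, pd_mul i (dk y) (h.pd hc i).diff,
        pd_mul i ((hcoord i).differentiable (by simp) y) (aw2.diff.const_mul 2), hci, hin,
        pd_kern x hδ]
      ring
    have hn : ‖y - x‖ ^ 2 = ∑ i, (y i - x i) ^ 2 := by rw [normsq_eq]; simp
    have hk1 : kern x δ y * (‖y - x‖ ^ 2 + δ ^ 2) = 1 :=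
      inv_mul_cancel₀ (by positivity)
    simp only [e1, Finset.sum_add_distrib, Finset.sum_sub_distrib, ← Finset.mul_sum]
    rw [← hn, ← lap_eq]
    simp
    linear_combination (-8 * kern x δ y ^ 2 * w y) * hk1
  simp only [e] at hdiv
  have i1 : Integrable (fun y => kern x δ y * lap w y) :=
    ((h.lap hc).mul_left hc fun _ _ => hk.contDiffAt).integrable hK
  have i2 : Integrable (fun y => 8 * δ ^ 2 * (w y * kern x δ y ^ 3)) := by
    have := (h.mul_left hc fun _ _ => (hk.pow 3).contDiffAt).integrable hK
    simpa only [mul_comm (w _)] using this.const_mul _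
  rw [integral_add i1 i2] at hdiv
  linarith

/-- The substitution `y = x + δ z`. -/
lemma integral_kern_rescale (w : EuclideanSpace ℝ (Fin 4) → ℝ) (x : EuclideanSpace ℝ (Fin 4))
    {δ : ℝ} (hδ : 0 < δ) :
    ∫ y, 8 * δ ^ 2 * (w y * kern x δ y ^ 3) =
      8 * ∫ z, w (x + δ • z) * ((1 + ‖z‖ ^ 2)⁻¹) ^ 3 := by
  rw [← integral_add_left_eq_self _ x]
  have h := Measure.integral_comp_smul (volume : Measure (EuclideanSpace ℝ (Fin 4)))
    (fun y => 8 * δ ^ 2 * (w (x + y) * kern x δ (x + y) ^ 3)) δ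
  have hpos : (0 : ℝ) < δ ^ 4 := by positivity
  simp only [finrank_euclideanSpace, Fintype.card_fin, abs_of_pos (inv_pos.2 hpos),
    smul_eq_mul] at h
  rw [eq_inv_mul_iff_mul_eq₀ hpos.ne'] at h
  rw [← h, ← integral_const_mul, ← integral_const_mul]
  congr 1 with z
  have : kern x δ (x + δ • z) = (δ ^ 2)⁻¹ * (1 + ‖z‖ ^ 2)⁻¹ := by
    unfold kern
    rw [add_sub_cancel_left, norm_smul, Real.norm_of_nonneg hδ.le, ← mul_inv]
    congr 1; ring
  rw [this]
  field_simp

/-- The bound `4π² |w(x)| ≤ ∫ |Δw(y)| |x - y|⁻² dy`, by letting the regularization tend to zero. -/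
lemma newton_bound (h : Adm K w) (hK : IsCompact K) (x : EuclideanSpace ℝ (Fin 4)) :
    ENNReal.ofReal (4 * π ^ 2 * |w x|) ≤ ∫⁻ y, (‖x - y‖ₑ ^ 2)⁻¹ * ‖lap w y‖ₑ := by
  have hlim : Filter.Tendsto (fun n : ℕ => ∫ z, w (x + (1 / ((n : ℝ) + 1)) • z) *
      ((1 + ‖z‖ ^ 2)⁻¹) ^ 3) Filter.atTop
      (𝓝 (∫ z : EuclideanSpace ℝ (Fin 4), w x * ((1 + ‖z‖ ^ 2)⁻¹) ^ 3)) := by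
    obtain ⟨C, hC⟩ := (h.hasCompactSupport hK).exists_bound_of_continuous h.smooth.continuous
    have hb : Continuous fun z : EuclideanSpace ℝ (Fin 4) => ((1 + ‖z‖ ^ 2)⁻¹) ^ 3 :=
      (Continuous.inv₀ (by fun_prop) fun z => by positivity).pow 3
    refine tendsto_integral_of_dominated_convergence
      (fun z => C * ((1 + ‖z‖ ^ 2)⁻¹) ^ 3) (fun n => ?_) (integrable_bump.const_mul C)
      (fun n => ?_) ?_
    · have hw := h.smooth.continuous
      exact ((hw.comp (by fun_prop)).mul hb).aestronglyMeasurable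
    · refine Filter.Eventually.of_forall fun z => ?_
      rw [norm_mul, Real.norm_of_nonneg (by positivity : 0 ≤ ((1 + ‖z‖ ^ 2)⁻¹) ^ 3)]
      exact mul_le_mul_of_nonneg_right (hC _) (by positivity)
    · refine Filter.Eventually.of_forall fun z => Filter.Tendsto.mul_const _ ?_
      have h1 : Filter.Tendsto (fun n : ℕ => x + (1 / ((n : ℝ) + 1)) • z) Filter.atTop
          (𝓝 (x + (0 : ℝ) • z)) :=
        (tendsto_one_div_add_atTop_nhds_zero_nat.smul_const z).const_add x
      rw [zero_smul, add_zero] at h1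
      exact (h.smooth.continuous.tendsto x).comp h1
  rw [integral_const_mul, integral_bump] at hlim
  have hlim2 := (ENNReal.continuous_ofReal.tendsto _).comp ((hlim.const_mul 8).abs)
  have e0 : |8 * (w x * (π ^ 2 / 2))| = 4 * π ^ 2 * |w x| := by
    rw [show 8 * (w x * (π ^ 2 / 2)) = 4 * π ^ 2 * w x by ring, abs_mul,
      abs_of_pos (by positivity)]
  rw [e0] at hlim2
  refine le_of_tendsto hlim2 (Filter.Eventually.of_forall fun n => ?_)
  have hδ : 0 < 1 / ((n : ℝ) + 1) := by positivity
  simp only [Function.comp]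
  rw [← integral_kern_rescale w x hδ, ← abs_neg, ← integral_kern h hK x hδ, ← Real.norm_eq_abs,
    ofReal_norm]
  refine (enorm_integral_le_lintegral_enorm _).trans (lintegral_mono fun y => ?_)
  rw [enorm_mul]
  gcongr
  by_cases hxy : x = y
  · simp [hxy]
  · have hpos : 0 < ‖x - y‖ := norm_pos_iff.2 (sub_ne_zero.2 hxy)
    rw [← ofReal_norm, ← ofReal_norm, ← ENNReal.ofReal_pow hpos.le,
      ← ENNReal.ofReal_inv_of_pos (by positivity)]
    refine ENNReal.ofReal_le_ofReal ?_
    unfold kern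
    rw [Real.norm_of_nonneg (by positivity), norm_sub_rev y x]
    gcongr
    exact le_add_of_nonneg_right (by positivity)

end Newton

/-! ### The `L^q` bound by the Laplacian -/

section Kernel

lemma lintegral_kernel_ball (x : EuclideanSpace ℝ (Fin 4)) {ρ α : ℝ} (hρ : 0 < ρ) (hα : α < 4) :
    ∫⁻ y in Metric.ball x ρ, ‖x - y‖ₑ ^ (-α) ≤
      ENNReal.ofReal (2 * π ^ 2 * (ρ ^ (4 - α) / (4 - α))) := by
  set g : ℝ → ℝ := (Set.Iio ρ).indicator fun r => r ^ (-α) with hg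
  have hval : ∫ y : EuclideanSpace ℝ (Fin 4), g ‖y‖ = 2 * π ^ 2 * (ρ ^ (4 - α) / (4 - α)) := by
    rw [integral_radial]
    congr 1
    have e : ∀ r ∈ Set.Ioi (0 : ℝ), r ^ 3 * g r =
        (Set.Iio ρ).indicator (fun r => r ^ (3 - α)) r := by
      intro r hr
      have hr : 0 < r := hr
      by_cases h : r ∈ Set.Iio ρ
      · simp only [hg, Set.indicator_of_mem h]
        rw [← Real.rpow_natCast, ← Real.rpow_add hr]
        norm_num [sub_eq_add_neg]
      · simp [hg, Set.indicator_of_notMem h]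
    rw [setIntegral_congr_fun measurableSet_Ioi e, setIntegral_indicator measurableSet_Iio,
      Set.Ioi_inter_Iio, ← integral_Ioc_eq_integral_Ioo,
      ← intervalIntegral.integral_of_le hρ.le, integral_rpow (Or.inl (by linarith)),
      show 3 - α + 1 = 4 - α by ring, Real.zero_rpow (by linarith), sub_zero]
  have hpos : 0 < 2 * π ^ 2 * (ρ ^ (4 - α) / (4 - α)) := by
    have : 0 < 4 - α := by linarith
    positivity
  have hgint : Integrable fun y : EuclideanSpace ℝ (Fin 4) => g ‖y‖ := by
    -- the integral of a non-integrable function is `0`, but this one is positive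
    by_contra h
    rw [integral_undef h] at hval
    linarith
  have hg0 : ∀ y : EuclideanSpace ℝ (Fin 4), 0 ≤ g ‖y‖ := fun y =>
    Set.indicator_apply_nonneg fun _ => by positivity
  rw [← hval, ofReal_integral_eq_lintegral_ofReal hgint (Filter.Eventually.of_forall hg0),
    ← lintegral_indicator measurableSet_ball, ← lintegral_add_left_eq_self _ x]
  refine lintegral_mono_ae ?_
  -- at `y = 0` the kernel is infinite while the real power takes a finite value
  have hne : ∀ᵐ y : EuclideanSpace ℝ (Fin 4), y ≠ 0 := by
    simp [ae_iff]
  filter_upwards [hne] with y hy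
  have hy : 0 < ‖y‖ := norm_pos_iff.2 hy
  by_cases h : ‖y‖ < ρ
  · rw [Set.indicator_of_mem (by simpa using h)]
    simp only [hg]
    rw [Set.indicator_of_mem (by simpa using h), sub_add_cancel_left, enorm_neg, ← ofReal_norm,
      ENNReal.ofReal_rpow_of_pos hy]
  · rw [Set.indicator_of_notMem (by simpa using h)]
    exact bot_le

/-- Among all sets of given volume, the ball centred at `x` maximizes `∫ |x - y|^(-α) dy`: moving
mass from `Ω \ B` to `B \ Ω` increases the kernel. The right-hand side is the value for the ball,
whose radius is `ρ`. -/
lemma lintegral_kernel_le {Ω : Set (EuclideanSpace ℝ (Fin 4))} (hΩ : MeasurableSet Ω)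
    (x : EuclideanSpace ℝ (Fin 4)) {ρ α : ℝ} (hρ : 0 < ρ) (hα0 : 0 ≤ α) (hα : α < 4)
    (hvol : volume Ω = ENNReal.ofReal (π ^ 2 / 2 * ρ ^ 4)) :
    ∫⁻ y in Ω, ‖x - y‖ₑ ^ (-α) ≤ ENNReal.ofReal (2 * π ^ 2 * (ρ ^ (4 - α) / (4 - α))) := by
  refine le_trans ?_ (lintegral_kernel_ball x hρ hα)
  set B := Metric.ball x ρ with hB
  have mB : MeasurableSet B := measurableSet_ball
  let c : ENNReal := ENNReal.ofReal ρ ^ (-α)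
  have hvB : volume B = volume Ω := by rw [hvol, volume_ball_four x ρ hρ.le]
  have hdiff : volume (Ω \ B) = volume (B \ Ω) := by
    have h1 := measure_inter_add_sdiff (μ := volume) Ω mB
    have h2 := measure_inter_add_sdiff (μ := volume) B hΩ
    rw [Set.inter_comm, hvB, ← h1] at h2
    have hfin : volume (Ω ∩ B) ≠ ⊤ :=
      ne_top_of_le_ne_top (by rw [hvol]; exact ENNReal.ofReal_ne_top)
        (measure_mono Set.inter_subset_left)
    exact ((ENNReal.add_right_inj hfin).1 h2).symm
  have hout : ∀ y ∈ Ω \ B, ‖x - y‖ₑ ^ (-α) ≤ c := fun y hy => by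
    simp only [c, ENNReal.rpow_neg]
    refine ENNReal.inv_le_inv.2 (ENNReal.rpow_le_rpow ?_ hα0)
    rw [← ofReal_norm]
    refine ENNReal.ofReal_le_ofReal ?_
    have := hy.2
    rw [hB, Metric.mem_ball, dist_comm, dist_eq_norm] at this
    linarith
  have hin : ∀ y ∈ B \ Ω, c ≤ ‖x - y‖ₑ ^ (-α) := fun y hy => by
    simp only [c, ENNReal.rpow_neg]
    refine ENNReal.inv_le_inv.2 (ENNReal.rpow_le_rpow ?_ hα0)
    rw [← ofReal_norm]
    refine ENNReal.ofReal_le_ofReal ?_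
    have := hy.1
    rw [hB, Metric.mem_ball, dist_comm, dist_eq_norm] at this
    linarith
  calc ∫⁻ y in Ω, ‖x - y‖ₑ ^ (-α)
      = (∫⁻ y in Ω ∩ B, ‖x - y‖ₑ ^ (-α)) + ∫⁻ y in Ω \ B, ‖x - y‖ₑ ^ (-α) :=
        (lintegral_inter_add_sdiff _ Ω mB).symm
    _ ≤ (∫⁻ y in Ω ∩ B, ‖x - y‖ₑ ^ (-α)) + ∫⁻ _ in Ω \ B, c :=
        add_le_add_right (setLIntegral_mono' (hΩ.diff mB) hout) _
    _ = (∫⁻ y in Ω ∩ B, ‖x - y‖ₑ ^ (-α)) + ∫⁻ _ in B \ Ω, c := by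
        rw [setLIntegral_const, setLIntegral_const, hdiff]
    _ ≤ (∫⁻ y in B ∩ Ω, ‖x - y‖ₑ ^ (-α)) + ∫⁻ y in B \ Ω, ‖x - y‖ₑ ^ (-α) := by
        rw [Set.inter_comm]
        exact add_le_add_right (setLIntegral_mono' (mB.diff hΩ) hin) _
    _ = ∫⁻ y in B, ‖x - y‖ₑ ^ (-α) := lintegral_inter_add_sdiff _ B hΩ

/-- Schur-type (Young) estimate: an integral operator whose symmetric kernel is uniformly in `L^s`,
`1/s = 1/2 + 1/q`, maps `L²` to `L^q`. -/
lemma young_bound {X : Type*} [MeasurableSpace X] (μ : Measure X) [SFinite μ]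
    {a : X → X → ENNReal} (ha : Measurable (Function.uncurry a)) (hsymm : ∀ x y, a x y = a y x)
    {g : X → ENNReal} (hg : Measurable g) {q s : ℝ} (hq : 2 < q) (hs : 0 < s)
    (hsq : s * (1 / q + 1 / 2) = 1) {Λ : ENNReal} (hΛ : ∀ x, ∫⁻ y, a x y ^ s ∂μ ≤ Λ) :
    ∫⁻ x, (∫⁻ y, a x y * g y ∂μ) ^ q ∂μ ≤
      Λ ^ (q / 2 + 1) * (∫⁻ y, g y ^ (2 : ℝ) ∂μ) ^ (q / 2) := by
  have q0 : 0 < q := by linarith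
  set N := ∫⁻ y, g y ^ (2 : ℝ) ∂μ
  have hax : ∀ x, Measurable (a x) := fun x => ha.comp measurable_prodMk_left
  have hr : 0 ≤ 1 / 2 - 1 / q := by
    have : 1 / q ≤ 1 / 2 := one_div_le_one_div_of_le (by norm_num) hq.le
    linarith
  have hqi : 0 ≤ 1 / q := by positivity
  -- Hölder for `a g = (a^s g²)^(1/q) · (a^s)^(1/2) · (g²)^(1/2 - 1/q)`
  have holder : ∀ x, (∫⁻ y, a x y * g y ∂μ) ≤
      (∫⁻ y, a x y ^ s * g y ^ (2 : ℝ) ∂μ) ^ (1 / q) * (∫⁻ y, a x y ^ s ∂μ) ^ (1 / 2 : ℝ) *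
        N ^ (1 / 2 - 1 / q) := by
    intro x
    have h := ENNReal.lintegral_prod_norm_pow_le (μ := μ) (Finset.univ : Finset (Fin 3))
      (f := ![fun y => a x y ^ s * g y ^ (2 : ℝ), fun y => a x y ^ s, fun y => g y ^ (2 : ℝ)])
      (p := ![1 / q, 1 / 2, 1 / 2 - 1 / q])
      (by
        intro i _
        have := hax x
        fin_cases i <;> simp <;> fun_prop)
      (by simp [Fin.sum_univ_three]; ring)
      (by intro i _; fin_cases i <;> simp <;> first | positivity | simpa using hr)
    simp only [Fin.prod_univ_three, Matrix.cons_val_zero, Matrix.cons_val_one,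
      Matrix.cons_val] at h
    refine le_trans (lintegral_mono fun y => le_of_eq ?_) h
    rw [ENNReal.mul_rpow_of_nonneg _ _ hqi, ← ENNReal.rpow_mul, ← ENNReal.rpow_mul,
      ← ENNReal.rpow_mul, ← ENNReal.rpow_mul]
    calc a x y * g y = a x y ^ (s * (1 / q) + s * (1 / 2)) *
          g y ^ (2 * (1 / q) + 2 * (1 / 2 - 1 / q)) := by
          rw [show s * (1 / q) + s * (1 / 2) = 1 by linarith,
            show 2 * (1 / q) + 2 * (1 / 2 - 1 / q) = 1 by ring, ENNReal.rpow_one,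
            ENNReal.rpow_one]
      _ = _ := by
          rw [ENNReal.rpow_add_of_nonneg _ _ (by positivity) (by positivity),
            ENNReal.rpow_add_of_nonneg _ _ (by positivity) (by positivity)]
          ring
  have hstep : ∀ x, (∫⁻ y, a x y * g y ∂μ) ^ q ≤
      (Λ ^ (q / 2) * N ^ (q / 2 - 1)) * ∫⁻ y, a x y ^ s * g y ^ (2 : ℝ) ∂μ := by
    intro x
    refine (ENNReal.rpow_le_rpow (holder x) q0.le).trans ?_
    rw [ENNReal.mul_rpow_of_nonneg _ _ q0.le, ENNReal.mul_rpow_of_nonneg _ _ q0.le,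
      ← ENNReal.rpow_mul, ← ENNReal.rpow_mul, ← ENNReal.rpow_mul, one_div_mul_cancel q0.ne',
      ENNReal.rpow_one, show 1 / 2 * q = q / 2 by ring,
      show (1 / 2 - 1 / q) * q = q / 2 - 1 by field_simp]
    calc _ ≤ (∫⁻ y, a x y ^ s * g y ^ (2 : ℝ) ∂μ) * Λ ^ (q / 2) * N ^ (q / 2 - 1) := by
          gcongr
          exact hΛ x
      _ = _ := by ring
  have hmeas : Measurable (Function.uncurry fun x y => a x y ^ s * g y ^ (2 : ℝ)) :=
    (ha.pow_const s).mul ((hg.comp measurable_snd).pow_const _)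
  have hdouble : ∫⁻ x, ∫⁻ y, a x y ^ s * g y ^ (2 : ℝ) ∂μ ∂μ ≤ Λ * N := by
    rw [lintegral_lintegral_swap hmeas.aemeasurable]
    rw [← lintegral_const_mul _ (hg.pow_const _)]
    refine lintegral_mono fun y => ?_
    simp only [hsymm _ y]
    rw [lintegral_mul_const _ ((hax y).pow_const s)]
    gcongr
    exact hΛ y
  calc _ ≤ ∫⁻ x, (Λ ^ (q / 2) * N ^ (q / 2 - 1)) * ∫⁻ y, a x y ^ s * g y ^ (2 : ℝ) ∂μ ∂μ :=
        lintegral_mono hstep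
    _ = (Λ ^ (q / 2) * N ^ (q / 2 - 1)) * ∫⁻ x, ∫⁻ y, a x y ^ s * g y ^ (2 : ℝ) ∂μ ∂μ :=
        lintegral_const_mul _ hmeas.lintegral_prod_right'
    _ ≤ (Λ ^ (q / 2) * N ^ (q / 2 - 1)) * (Λ * N) := by gcongr
    _ = Λ ^ (q / 2 + 1) * N ^ (q / 2 - 1 + 1) := by
        rw [ENNReal.rpow_add_of_nonneg _ _ (by positivity) zero_le_one,
          ENNReal.rpow_add_of_nonneg _ _ (by linarith) zero_le_one, ENNReal.rpow_one,
          ENNReal.rpow_one]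
        ring
    _ = _ := by rw [sub_add_cancel]

/-- For `w` smooth and compactly supported in `Ω`, the `L^q` norm over `Ω` is controlled by `‖Δw‖₂`,
with the constant that the Newton kernel gives. -/
lemma sobolev_bound {K Ω : Set (EuclideanSpace ℝ (Fin 4))} {w : EuclideanSpace ℝ (Fin 4) → ℝ}
    (h : Adm K w) (hK : IsCompact K) (hKΩ : K ⊆ Ω) (hΩ : MeasurableSet Ω) (hv0 : volume Ω ≠ 0)
    (hvt : volume Ω ≠ ⊤) {q : ℝ} (hq : 2 < q) :
    (∫ x in Ω, |w x| ^ q) ^ (1 / q) ≤ 1 / (4 * Real.sqrt 2 * π) *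
        (1 + q / 2) ^ (1 / 2 + 1 / q) * (volume Ω).toReal ^ (1 / q) *
          Real.sqrt (∫ x, lap w x ^ 2) := by
  have q0 : 0 < q := by linarith
  have hV : 0 < (volume Ω).toReal := ENNReal.toReal_pos hv0 hvt
  set V := (volume Ω).toReal with hVdef
  have hc0 : 0 < π ^ 2 / 2 := by positivity
  -- `ρ` is the radius of the ball of volume `|Ω|`
  set ρ : ℝ := (V / (π ^ 2 / 2)) ^ (1 / 4 : ℝ) with hρdef
  have hρ : 0 < ρ := by positivity
  have hρ4 : ρ ^ 4 = V / (π ^ 2 / 2) := by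
    rw [hρdef, ← Real.rpow_natCast, ← Real.rpow_mul (by positivity)]
    norm_num
  have hvol : volume Ω = ENNReal.ofReal (π ^ 2 / 2 * ρ ^ 4) := by
    rw [hρ4, mul_div_cancel₀ _ hc0.ne', hVdef, ENNReal.ofReal_toReal hvt]
  -- the exponent with `1/s = 1/2 + 1/q`
  set s : ℝ := 2 * q / (q + 2) with hs
  have s0 : 0 < s := by positivity
  have hsq : s * (1 / q + 1 / 2) = 1 := by rw [hs]; field_simp; ring
  have hs4 : 4 - 2 * s = 8 / (q + 2) := by rw [hs]; field_simp; ring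
  have hs2 : 2 * s < 4 := by
    have : 0 < 8 / (q + 2) := by positivity
    linarith
  set Λ : ℝ := 2 * π ^ 2 * (ρ ^ (4 - 2 * s) / (4 - 2 * s)) with hΛ
  have hΛ0 : 0 < Λ := by rw [hΛ, hs4]; positivity
  set G : ℝ := ∫ x, lap w x ^ 2 with hG
  have hG0 : 0 ≤ G := integral_nonneg fun x => sq_nonneg _
  have hc := hK.isClosed
  have hlap := h.lap hc
  have hlapm : Measurable fun y => ‖lap w y‖ₑ := hlap.smooth.continuous.measurable.enorm
  have hG2 : ∫⁻ y in Ω, ‖lap w y‖ₑ ^ (2 : ℝ) ≤ ENNReal.ofReal G := by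
    refine (setLIntegral_le_lintegral _ _).trans ?_
    rw [hG, ofReal_integral_eq_lintegral_ofReal _ (Filter.Eventually.of_forall fun x => sq_nonneg _)]
    · refine le_of_eq (lintegral_congr fun y => ?_)
      rw [← sq_abs, ← Real.norm_eq_abs, ← ofReal_norm, ENNReal.ofReal_pow (norm_nonneg _)]
      norm_num
    · have := (hlap.mul_left hc fun _ _ => hlap.smooth.contDiffAt).integrable hK
      simpa only [pow_two] using this
  have hnewton : ∀ x, ENNReal.ofReal (4 * π ^ 2 * |w x|) ≤
      ∫⁻ y in Ω, (‖x - y‖ₑ ^ 2)⁻¹ * ‖lap w y‖ₑ := by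
    intro x
    refine (newton_bound h hK x).trans (le_of_eq ?_)
    rw [← lintegral_indicator hΩ]
    refine lintegral_congr fun y => ?_
    by_cases hy : y ∈ Ω
    · rw [Set.indicator_of_mem hy]
    · rw [Set.indicator_of_notMem hy, hlap.zero y fun hyK => hy (hKΩ hyK)]
      simp
  have hyoung := young_bound (volume.restrict Ω) (g := fun y => ‖lap w y‖ₑ)
    (a := fun x y : EuclideanSpace ℝ (Fin 4) => (‖x - y‖ₑ ^ 2)⁻¹)
    (by
      have : Measurable fun p : EuclideanSpace ℝ (Fin 4) × EuclideanSpace ℝ (Fin 4) =>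
        ‖p.1 - p.2‖ₑ := (measurable_fst.sub measurable_snd).enorm
      exact (this.pow_const 2).inv)
    (fun x y => by
      rw [← enorm_neg, neg_sub])
    hlapm hq s0 hsq (Λ := ENNReal.ofReal Λ)
    (fun x => by
      refine le_trans (le_of_eq ?_) (lintegral_kernel_le hΩ x hρ (by positivity) hs2 hvol)
      refine lintegral_congr fun y => ?_
      rw [ENNReal.inv_rpow, ← ENNReal.rpow_natCast, ← ENNReal.rpow_mul, ENNReal.rpow_neg]
      norm_num)
  have hmain : ∫⁻ x in Ω, ENNReal.ofReal ((4 * π ^ 2 * |w x|) ^ q) ≤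
      ENNReal.ofReal (Λ ^ (q / 2 + 1) * G ^ (q / 2)) := by
    rw [ENNReal.ofReal_mul (by positivity), ← ENNReal.ofReal_rpow_of_nonneg hΛ0.le (by positivity),
      ← ENNReal.ofReal_rpow_of_nonneg hG0 (by positivity)]
    refine (lintegral_mono fun x => ?_).trans (hyoung.trans ?_)
    · rw [← ENNReal.ofReal_rpow_of_nonneg (by positivity) q0.le]
      exact ENNReal.rpow_le_rpow (hnewton x) q0.le
    · gcongr
  have hreal : (4 * π ^ 2) ^ q * ∫ x in Ω, |w x| ^ q ≤ Λ ^ (q / 2 + 1) * G ^ (q / 2) := by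
    have e : ∀ x, (4 * π ^ 2) ^ q * |w x| ^ q = (4 * π ^ 2 * |w x|) ^ q := fun x =>
      (Real.mul_rpow (by positivity) (abs_nonneg _)).symm
    rw [← integral_const_mul, integral_eq_lintegral_of_nonneg_ae
      (Filter.Eventually.of_forall fun x => by positivity)]
    · simp only [e]
      exact ENNReal.toReal_le_of_le_ofReal (by positivity) hmain
    · exact (continuous_const.mul ((h.smooth.continuous.abs).rpow_const
        fun _ => Or.inr q0.le)).aestronglyMeasurable
  have hI0 : 0 ≤ ∫ x in Ω, |w x| ^ q := integral_nonneg fun x => by positivity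
  have hroot := Real.rpow_le_rpow (by positivity) hreal (by positivity : 0 ≤ 1 / q)
  rw [Real.mul_rpow (x := (4 * π ^ 2) ^ q) (by positivity) hI0,
    Real.mul_rpow (x := Λ ^ (q / 2 + 1)) (by positivity) (by positivity),
    ← Real.rpow_mul (by positivity), ← Real.rpow_mul hΛ0.le, ← Real.rpow_mul hG0,
    mul_one_div_cancel q0.ne', Real.rpow_one,
    show q / 2 * (1 / q) = 1 / 2 by field_simp,
    show (q / 2 + 1) * (1 / q) = 1 / 2 + 1 / q by field_simp, ← Real.sqrt_eq_rpow] at hroot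
  have hΛval : Λ ^ (1 / 2 + 1 / q) =
      (π / √2) * ((1 + q / 2) ^ (1 / 2 + 1 / q) * V ^ (1 / q)) := by
    have e1 : Λ = (π ^ 2 / 2) * ((1 + q / 2) * (ρ ^ 4) ^ (2 / (q + 2))) := by
      have : (ρ ^ 4) ^ (2 / (q + 2)) = ρ ^ (8 / (q + 2)) := by
        rw [← Real.rpow_natCast, ← Real.rpow_mul hρ.le]
        congr 1
        push_cast; ring
      rw [hΛ, hs4, this]
      field_simp
      ring
    have e2 : V ^ (1 / q) = (π ^ 2 / 2) ^ (1 / q) * (ρ ^ 4) ^ (1 / q) := by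
      rw [← Real.mul_rpow hc0.le (by positivity), hρ4, mul_div_cancel₀ _ hc0.ne']
    have e3 : (π ^ 2 / 2) ^ (1 / 2 : ℝ) = π / √2 := by
      rw [← Real.sqrt_eq_rpow, Real.sqrt_div (by positivity), Real.sqrt_sq Real.pi_pos.le]
    rw [e1, e2, Real.mul_rpow hc0.le (by positivity), Real.mul_rpow (by positivity) (by positivity),
      Real.rpow_add hc0, e3, ← Real.rpow_mul (by positivity),
      show 2 / (q + 2) * (1 / 2 + 1 / q) = 1 / q by field_simp]
    ring
  rw [hΛval, ← le_div_iff₀' (by positivity)] at hroot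
  refine hroot.trans (le_of_eq ?_)
  field_simp

end Kernel

/-- `L^q`-norm estimate (Proposition 4). -/
theorem stmt15 (Ω : Set (EuclideanSpace ℝ (Fin 4))) (hopen : IsOpen Ω) (hconn : IsConnected Ω)
    (hbdd : Bornology.IsBounded Ω) (h0 : (0 : EuclideanSpace ℝ (Fin 4)) ∈ Ω)
    (R : ℝ) (hR : ∀ x ∈ Ω, ‖x‖ ≤ R) (q : ℝ) (hq : 2 < q)
    (u : EuclideanSpace ℝ (Fin 4) → ℝ) (hsmooth : ContDiff ℝ (⊤ : ℕ∞) u)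
    (hcpt : HasCompactSupport u) (hsupp : tsupport u ⊆ Ω \ {0}) :
    (∫ x in Ω, |u x / E2 (‖x‖ / R)| ^ q) ^ (1 / q) ≤
      1 / (4 * Real.sqrt 2 * π) * (Real.sqrt (3 / 2) + 9 / 4 + Real.sqrt (1 / 3)) *
        (1 + q / 2) ^ (1 / 2 + 1 / q) * (volume Ω).toReal ^ (1 / q) *
          (tildeI4 Ω R u) ^ ((1 : ℝ) / 2) := by
  have hK : IsCompact (tsupport u) := hcpt
  have h0K : (0 : EuclideanSpace ℝ (Fin 4)) ∉ tsupport u := fun h => (hsupp h).2 rfl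
  have hKΩ : tsupport u ⊆ Ω := fun x hx => (hsupp hx).1
  have hR0 : 0 < R := by
    obtain ⟨ε, hε, hball⟩ := Metric.isOpen_iff.1 hopen 0 h0
    have hn : ‖(EuclideanSpace.single 0 (ε / 2) : EuclideanSpace ℝ (Fin 4))‖ = ε / 2 := by
      rw [PiLp.norm_single, Real.norm_of_nonneg (by positivity)]
    have := hR _ (hball (by rw [mem_ball_zero_iff, hn]; linarith))
    rw [hn] at this
    linarith
  have hKR : ∀ x ∈ tsupport u, ‖x‖ ≤ R := fun x hx => hR x (hKΩ hx)
  have hu : Adm (tsupport u) u := ⟨hsmooth, fun x hx => image_eq_zero_of_notMem_tsupport hx⟩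
  have hv0 : volume Ω ≠ 0 := (hopen.measure_pos volume ⟨0, h0⟩).ne'
  have hsob := sobolev_bound (adm_div_E2 hu hK.isClosed h0K hR0 hKR) hK hKΩ hopen.measurableSet hv0
    hbdd.measure_lt_top.ne hq
  have hcomp := lap_div_E2_sq_le hu hK h0K hR0 hKR
  have hI : tildeI4 Ω R u = (∫ x, lap u x ^ 2) - ∫ x, u x ^ 2 / (‖x‖ ^ 4 * E1 (‖x‖ / R) ^ 2) := by
    rw [tildeI4, setIntegral_eq_integral_of_forall_compl_eq_zero,
      setIntegral_eq_integral_of_forall_compl_eq_zero]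
    · intro x hx
      rw [hu.zero x fun h => hx (hKΩ h)]
      simp
    · intro x hx
      rw [(hu.lap hK.isClosed).zero x fun h => hx (hKΩ h)]
      simp
  rw [← hI] at hcomp
  -- the sides are about 3.742 and 4.052
  have h14 : √14 ≤ √(3 / 2) + 9 / 4 + √(1 / 3) := by
    have a : √14 ≤ 15 / 4 := Real.sqrt_le_iff.2 (by norm_num)
    have b : 6 / 5 ≤ √(3 / 2) := Real.le_sqrt_of_sq_le (by norm_num)
    have c : 1 / 2 ≤ √(1 / 3) := Real.le_sqrt_of_sq_le (by norm_num)
    linarith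
  have hsqrt := (Real.sqrt_le_sqrt hcomp).trans_eq (Real.sqrt_mul (by norm_num) _)
  rw [← Real.sqrt_eq_rpow]
  simp only [div_eq_inv_mul (u _)]
  refine hsob.trans ?_
  calc _ ≤ 1 / (4 * Real.sqrt 2 * π) * (1 + q / 2) ^ (1 / 2 + 1 / q) *
        (volume Ω).toReal ^ (1 / q) *
          ((√(3 / 2) + 9 / 4 + √(1 / 3)) * √(tildeI4 Ω R u)) := by
        gcongr
        exact hsqrt.trans (by gcongr)
    _ = _ := by ring
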